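/- arXiv:1804.03982 — 3 statements merged into one kernel-verified Lean document; each statement's English description precedes it below -/
import Mathlib

section
/- Fix nonnegative integers k₁ and k₂. For every nonnegative integer N, ∑_{m=0}^{N} binomial(2N+k₁+k₂, 2m+k₁) · binomial(2m+k₁, m) · binomial(2(N−m)+k₂, N−m) = binomial(k₁+k₂, k₁) · (k₁+k₂+1)_{2N}² / [(k₁+1)_N (k₂+1)_N (k₁+k₂+1)_N N!], where (a)_n = a(a+1)⋯(a+n−1) is the rising factorial. -/
/-- The rising factorial (Pochhammer symbol) over ℚ. -/
noncomputable def risingQ (a : ℚ) (n : ℕ) : ℚ := (ascPochhammer ℚ n).eval a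

/-- Rising factorials at successors as factorial quotients. -/
lemma risingQ_fact (k n : ℕ) :
    risingQ ((k : ℚ) + 1) n = ((k + n).factorial : ℚ) / (k.factorial : ℚ) := by
  have hk : (k.factorial : ℚ) ≠ 0 := by exact_mod_cast k.factorial_ne_zero
  rw [eq_div_iff hk, ← Nat.factorial_mul_ascFactorial, ← ascPochhammer_nat_eq_ascFactorial]
  unfold risingQ
  push_cast
  ring

theorem binom_sum_closed_form (k₁ k₂ : ℕ) (N : ℕ) :
    (∑ m ∈ Finset.range (N + 1),
        ((2 * N + k₁ + k₂).choose (2 * m + k₁) *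
          (2 * m + k₁).choose m * (2 * (N - m) + k₂).choose (N - m) : ℚ)) =
      ((k₁ + k₂).choose k₁ : ℚ) * (risingQ (k₁ + k₂ + 1) (2 * N)) ^ 2 /
        (risingQ (k₁ + 1) N * risingQ (k₂ + 1) N * risingQ (k₁ + k₂ + 1) N *
          (Nat.factorial N : ℚ)) := by
  have hf : ∀ n : ℕ, (n.factorial : ℚ) ≠ 0 := fun n => by exact_mod_cast n.factorial_ne_zero
  have hc : ∀ a b : ℕ, ((a + b).choose a : ℚ) =
      ((a + b).factorial : ℚ) / ((a.factorial : ℚ) * (b.factorial : ℚ)) :=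
    fun a b => Nat.cast_add_choose ℚ
  have hV : ((N + (N + k₁ + k₂)).choose N : ℚ) =
      ∑ m ∈ Finset.range (N + 1), ((N + k₂).choose m * (N + k₁).choose (N - m) : ℚ) := by
    have h := Nat.add_choose_eq (N + k₂) (N + k₁) N
    rw [Finset.Nat.sum_antidiagonal_eq_sum_range_succ_mk] at h
    rw [show N + (N + k₁ + k₂) = N + k₂ + (N + k₁) by ring, h]
    push_cast
    rfl
  have hT : ∀ m ∈ Finset.range (N + 1),
      ((2 * N + k₁ + k₂).choose (2 * m + k₁) *
          (2 * m + k₁).choose m * (2 * (N - m) + k₂).choose (N - m) : ℚ) =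
      ((2 * N + k₁ + k₂).factorial : ℚ) / ((N + k₁).factorial * (N + k₂).factorial) *
        ((N + k₂).choose m * (N + k₁).choose (N - m)) := by
    intro m hm
    obtain ⟨j, rfl⟩ := Nat.exists_eq_add_of_le (Nat.lt_succ_iff.mp (Finset.mem_range.mp hm))
    rw [Nat.add_sub_cancel_left]
    have e1 := hc (2 * m + k₁) (2 * j + k₂)
    have e2 := hc m (m + k₁)
    have e3 := hc j (j + k₂)
    have e4 := hc m (j + k₂)
    have e5 := hc j (m + k₁)
    rw [show 2 * m + k₁ + (2 * j + k₂) = 2 * (m + j) + k₁ + k₂ by ring] at e1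
    rw [show m + (m + k₁) = 2 * m + k₁ by ring] at e2
    rw [show j + (j + k₂) = 2 * j + k₂ by ring] at e3
    rw [show m + (j + k₂) = m + j + k₂ by ring] at e4
    rw [show j + (m + k₁) = m + j + k₁ by ring] at e5
    rw [e1, e2, e3, e4, e5]
    have := hf (2 * m + k₁)
    have := hf (2 * j + k₂)
    have := hf (m + j + k₁)
    have := hf (m + j + k₂)
    have := hf (m + k₁)
    have := hf (j + k₂)
    have := hf m
    have := hf j
    field_simp
  rw [Finset.sum_congr rfl hT, ← Finset.mul_sum, ← hV, hc, hc, risingQ_fact, risingQ_fact,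
    ← Nat.cast_add, risingQ_fact, risingQ_fact,
    show N + (N + k₁ + k₂) = 2 * N + k₁ + k₂ by ring,
    show k₁ + k₂ + 2 * N = 2 * N + k₁ + k₂ by ring,
    show k₁ + k₂ + N = N + k₁ + k₂ by ring, Nat.add_comm k₁ N, Nat.add_comm k₂ N]
  have := hf (2 * N + k₁ + k₂)
  have := hf (N + k₁ + k₂)
  have := hf (N + k₁)
  have := hf (N + k₂)
  have := hf (k₁ + k₂)
  have := hf k₁
  have := hf k₂
  have := hf N
  field_simp
end

section
/- Let k₁ ≤ k₂ be nonnegative integers with k₂ − k₁ ≤ 1, and 0 ≤ x < 1. Then Ξ₂^{[k₁,k₂]}(x) := (1/4) ∫₀^π ∫₀^π cos(k₁θ₁) cos(k₂θ₂)/√(1 + x² − x(cos θ₁ + cos θ₂)) dθ₁ dθ₂ equals (π² (1/2)_{k₁+k₂} (2x)^{k₁+k₂}) / (4^{k₁+k₂+1} k₁! k₂!) · ₃F₂(1/2, k₁+1/2, k₁+k₂+1/2; k₂+1, k₁+k₂+1; −x²). -/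
open Real

/-- The rising factorial (Pochhammer symbol) over ℝ. -/
noncomputable def rising (a : ℝ) (n : ℕ) : ℝ := (ascPochhammer ℝ n).eval a

/-- Clausen's generalized hypergeometric series ₃F₂(a₁,a₂,a₃;b₁,b₂;x). -/
noncomputable def clausen3F2 (a₁ a₂ a₃ b₁ b₂ x : ℝ) : ℝ :=
  ∑' n : ℕ, rising a₁ n * rising a₂ n * rising a₃ n /
    (rising b₁ n * rising b₂ n * n.factorial) * x ^ n

/-- The rank-2 Melnikov function Ξ₂^{[k₁,k₂]}. -/
noncomputable def Xi2 (k₁ k₂ : ℕ) (x : ℝ) : ℝ :=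
  (1 / 4) * ∫ θ₁ in (0:ℝ)..π, ∫ θ₂ in (0:ℝ)..π,
    Real.cos (k₁ * θ₁) * Real.cos (k₂ * θ₂) /
      Real.sqrt (1 + x ^ 2 - x * (Real.cos θ₁ + Real.cos θ₂))


lemma rising_zero' (a : ℝ) : rising a 0 = 1 := by simp [rising]

lemma rising_succ' (a : ℝ) (n : ℕ) : rising a (n + 1) = rising a n * (a + n) := by
  simp [rising, ascPochhammer_succ_right]

lemma rising_pos' (a : ℝ) (ha : 0 < a) (n : ℕ) : 0 < rising a n := by
  induction n with
  | zero => simp [rising_zero']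
  | succ n ih => rw [rising_succ']; positivity

lemma rising_add' (a : ℝ) (m n : ℕ) : rising a (m + n) = rising a m * rising (a + m) n := by
  induction n with
  | zero => simp [rising_zero']
  | succ n ih => rw [← add_assoc, rising_succ', rising_succ', ih]; push_cast; ring

/-- Taylor coefficients of `(1-z)^(-1/2)`. -/
noncomputable def gco (n : ℕ) : ℝ := rising (1 / 2) n / n.factorial

lemma gco_zero : gco 0 = 1 := by simp [gco, rising_zero']

lemma gco_succ (n : ℕ) : (n + 1 : ℝ) * gco (n + 1) = (n + 1 / 2) * gco n := by
  unfold gco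
  rw [rising_succ', Nat.factorial_succ]
  push_cast
  field_simp
  ring

lemma gco_pos (n : ℕ) : 0 < gco n := by
  unfold gco
  have := rising_pos' (1/2) (by norm_num) n
  positivity

/-- Coefficients of Legendre polynomials. -/
noncomputable def qc (n j : ℕ) : ℝ :=
  if 2 * j ≤ n then (-1) ^ j * rising (1 / 2) (n - j) / (j.factorial * (n - 2 * j).factorial) else 0

/-- Legendre polynomial in the variable `y = 2t`. -/
noncomputable def qp (n : ℕ) (y : ℝ) : ℝ :=
  ∑ j ∈ Finset.range (n + 1), qc n j * y ^ (n - 2 * j)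

lemma qp_rec_zero (n : ℕ) (y : ℝ) : (n + 2 : ℝ) * (qc (n+2) 0 * y ^ (n+2))
    = (2 * n + 3) / 2 * y * (qc (n+1) 0 * y ^ (n+1)) := by
  simp only [qc]
  simp only [mul_zero, zero_le, if_true, Nat.sub_zero]
  rw [rising_succ' _ (n+1), Nat.factorial_succ (n+1)]
  push_cast
  have : (n:ℝ) + 2 ≠ 0 := by positivity
  field_simp
  ring

lemma qp_rec_succ (n j : ℕ) (y : ℝ) :
    (n + 2 : ℝ) * (qc (n+2) (j+1) * y ^ (n+2-2*(j+1)))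
    = (2 * n + 3) / 2 * y * (qc (n+1) (j+1) * y ^ (n+1-2*(j+1)))
      - (n+1) * (qc n j * y ^ (n - 2*j)) := by
  rcases lt_trichotomy n (2*j) with h | h | h
  · simp only [qc]
    rw [if_neg (by omega), if_neg (by omega), if_neg (by omega)]
    simp
  · subst h
    simp only [qc]
    rw [if_pos (by omega), if_neg (by omega), if_pos (by omega)]
    have e1 : 2 * j + 2 - (j+1) = j+1 := by omega
    have e2 : 2 * j - j = j := by omega
    have e3 : 2 * j + 2 - 2 * (j+1) = 0 := by omega
    rw [e1, e2, e3, Nat.sub_self, rising_succ', Nat.factorial_succ]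
    push_cast
    field_simp
    ring
  · obtain ⟨r, rfl⟩ : ∃ r, n = 2 * j + 1 + r := ⟨n - (2*j+1), by omega⟩
    simp only [qc]
    rw [if_pos (by omega), if_pos (by omega), if_pos (by omega)]
    have e1 : 2 * j + 1 + r + 2 - (j+1) = j+1+r+1 := by omega
    have e2 : 2 * j + 1 + r - j = j+1+r := by omega
    have e3 : 2 * j + 1 + r + 2 - 2 * (j+1) = r+1 := by omega
    have e4 : 2 * j + 1 + r + 1 - (j+1) = j+1+r := by omega
    have e5 : 2 * j + 1 + r + 1 - 2 * (j+1) = r := by omega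
    have e6 : 2 * j + 1 + r - 2 * j = r+1 := by omega
    rw [e1, e2, e3, e4, e5, e6, rising_succ', Nat.factorial_succ, Nat.factorial_succ]
    push_cast
    field_simp
    ring

lemma qp_rec (n : ℕ) (y : ℝ) :
    (n + 2 : ℝ) * qp (n+2) y = (2 * n + 3) / 2 * y * qp (n+1) y - (n+1) * qp n y := by
  have h1 : qp (n+1) y = ∑ j ∈ Finset.range (n + 3), qc (n+1) j * y ^ (n + 1 - 2 * j) := by
    rw [Finset.sum_range_succ]
    simp only [qp, qc]
    rw [if_neg (by omega : ¬ 2 * (n+2) ≤ n+1)]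
    simp
  have h0 : qp n y = ∑ j ∈ Finset.range (n + 2), qc n j * y ^ (n - 2 * j) := by
    rw [Finset.sum_range_succ]
    simp only [qp, qc]
    rw [if_neg (by omega : ¬ 2 * (n+1) ≤ n)]
    simp
  rw [h1, h0]
  unfold qp
  rw [Finset.sum_range_succ' _ (n+2), Finset.sum_range_succ' _ (n+2)]
  simp only [mul_add, Finset.mul_sum]
  rw [mul_zero, Nat.sub_zero, Nat.sub_zero, qp_rec_zero, add_sub_right_comm,
    ← Finset.sum_sub_distrib]
  congr 1
  exact Finset.sum_congr rfl fun j _ => qp_rec_succ n j y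

lemma qp_zero (y : ℝ) : qp 0 y = 1 := by simp [qp, qc, rising_zero']

lemma qp_one (y : ℝ) : qp 1 y = y / 2 := by
  simp [qp, qc, rising_zero', rising_succ', Finset.sum_range_succ]; ring

lemma qp_two (n : ℕ) : qp n 2 = 1 := by
  suffices h : qp n 2 = 1 ∧ qp (n+1) 2 = 1 from h.1
  induction n with
  | zero => simp [qp_zero, qp_one]
  | succ n ih =>
    refine ⟨ih.2, ?_⟩
    have := qp_rec n 2
    rw [ih.1, ih.2] at this
    have h2 : (n:ℝ) + 2 ≠ 0 := by positivity
    apply mul_left_cancel₀ h2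
    rw [this]; ring

open PowerSeries in
/-- The series of `(1-eX)^(-1/2)`. -/
noncomputable def Hs (e : ℂ) : PowerSeries ℂ := PowerSeries.mk fun n => (gco n : ℂ) * e ^ n

open PowerSeries in
lemma Hs_ode (e : ℂ) : 2 * ((1 - C e * X) * d⁄dX ℂ (Hs e)) = C e * Hs e := by
  ext n
  have g := gco_succ n
  have g' : ((n:ℂ) + 1) * (gco (n+1) : ℂ) = (n + 1/2) * gco n := by have := congrArg (fun r : ℝ => (r : ℂ)) g; push_cast at this; exact this
  rw [two_mul, map_add, sub_mul, one_mul, mul_assoc, map_sub, coeff_C_mul, coeff_C_mul]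
  cases n with
  | zero =>
    simp [coeff_derivative, Hs] at g' ⊢
    rw [← two_mul]
    linear_combination 2 * e * g'
  | succ n =>
    rw [coeff_succ_X_mul]
    simp only [coeff_derivative, Hs, coeff_mk]
    push_cast at g' ⊢
    linear_combination 2 * e^(n+2) * g'

open PowerSeries in
lemma P_ode (e f : ℂ) (hef : e * f = 1) :
    2 * ((1 - C (e + f) * X + X ^ 2) * d⁄dX ℂ (Hs e * Hs f)) =
      (C (e + f) - 2 * X) * (Hs e * Hs f) := by
  have h1 := Hs_ode e
  have h2 := Hs_ode f
  have hC : (C e : PowerSeries ℂ) * C f = 1 := by rw [← map_mul, hef, map_one]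
  rw [Derivation.leibniz, map_add, smul_eq_mul, smul_eq_mul]
  linear_combination (Hs f * (1 - C f * X)) * h1 + (Hs e * (1 - C e * X)) * h2 +
    (-2 * X * Hs e * Hs f - 2 * X ^ 2 * (Hs e * d⁄dX ℂ (Hs f) + Hs f * d⁄dX ℂ (Hs e))) * hC

open PowerSeries in
lemma P_rec (e f : ℂ) (hef : e * f = 1) (n : ℕ) :
    (n + 2 : ℂ) * coeff (n+2) (Hs e * Hs f) = (2 * n + 3) / 2 * (e + f) * coeff (n+1) (Hs e * Hs f)
      - (n+1) * coeff n (Hs e * Hs f) := by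
  have h := congrArg (coeff (n+1)) (P_ode e f hef)
  generalize Hs e * Hs f = P at h ⊢
  rw [two_mul, map_add, add_mul, sub_mul, one_mul, sub_mul, mul_assoc (C (e+f)), map_add, map_sub,
    map_sub, coeff_C_mul, coeff_C_mul, pow_two, mul_assoc X, coeff_succ_X_mul, coeff_succ_X_mul,
    mul_assoc 2, two_mul (X * P), map_add, coeff_succ_X_mul] at h
  cases n with
  | zero =>
    simp [coeff_derivative] at h ⊢
    linear_combination h / 2
  | succ n =>
    rw [coeff_succ_X_mul] at h
    simp only [coeff_derivative] at h
    push_cast at h ⊢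
    linear_combination h / 2

open PowerSeries in
lemma P_eq (e f : ℂ) (hef : e * f = 1) (y : ℝ) (hy : e + f = y) (n : ℕ) :
    coeff n (Hs e * Hs f) = (qp n y : ℂ) := by
  suffices h : coeff n (Hs e * Hs f) = (qp n y : ℂ) ∧ coeff (n+1) (Hs e * Hs f) = (qp (n+1) y : ℂ) from h.1
  induction n with
  | zero =>
    constructor
    · simp [qp_zero, Hs, gco_zero]
    · have h2 := gco_succ 0
      rw [gco_zero] at h2
      have h3 : gco 1 = 1/2 := by norm_num at h2 ⊢; linarith
      rw [zero_add, coeff_mul, Finset.Nat.antidiagonal_succ]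
      simp [Hs, qp_one, gco_zero, h3]
      rw [← hy]; ring
  | succ n ih =>
    refine ⟨ih.2, ?_⟩
    have h2 : (n:ℂ) + 2 ≠ 0 := by exact_mod_cast (by omega : n + 2 ≠ 0)
    apply mul_left_cancel₀ h2
    have h3 : ((n:ℂ) + 2) * (qp (n+2) y : ℂ) = (2 * n + 3) / 2 * y * qp (n+1) y - (n+1) * qp n y := by
      have := congrArg (fun r : ℝ => (r : ℂ)) (qp_rec n y); push_cast at this; exact this
    rw [P_rec e f hef, h3, ih.1, ih.2, hy]

lemma qp_eq_sum (e f : ℂ) (hef : e * f = 1) (y : ℝ) (hy : e + f = y) (n : ℕ) :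
    (qp n y : ℂ) = ∑ p ∈ Finset.HasAntidiagonal.antidiagonal n, ((gco p.1 : ℂ) * e ^ p.1) * ((gco p.2 : ℂ) * f ^ p.2) := by
  rw [← P_eq e f hef y hy, PowerSeries.coeff_mul]
  simp [Hs]

lemma gco_conv (n : ℕ) : ∑ p ∈ Finset.HasAntidiagonal.antidiagonal n, gco p.1 * gco p.2 = 1 := by
  have := qp_eq_sum 1 1 (by norm_num) 2 (by norm_num) n
  rw [qp_two] at this
  simp only [one_pow, mul_one] at this
  exact_mod_cast this.symm

lemma gco_le_one (n : ℕ) : gco n ≤ 1 := by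
  induction n with
  | zero => simp [gco_zero]
  | succ n ih =>
    have := gco_succ n
    have h := gco_pos n
    have h3 : (0:ℝ) < n + 1 := by positivity
    by_contra hc
    push Not at hc
    nlinarith

lemma exists_unit (y : ℝ) (hy : |y| ≤ 2) : ∃ e : ℂ, ‖e‖ = 1 ∧ e * starRingEnd ℂ e = 1 ∧
    e + starRingEnd ℂ e = y := by
  rw [abs_le] at hy
  have hs : 0 ≤ 1 - (y/2)^2 := by nlinarith
  have hsq := Real.sq_sqrt hs
  have h1 : (⟨y/2, √(1 - (y/2)^2)⟩ : ℂ) * starRingEnd ℂ ⟨y/2, √(1 - (y/2)^2)⟩ = 1 := by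
    apply Complex.ext <;> simp <;> ring_nf
    ring_nf at hsq
    rw [hsq]; ring
  refine ⟨⟨y/2, √(1 - (y/2)^2)⟩, ?_, h1, ?_⟩
  · rw [Complex.mul_conj, Complex.normSq_eq_norm_sq] at h1
    have h2 : ‖(⟨y/2, √(1 - (y/2)^2)⟩ : ℂ)‖ ^ 2 = 1 := by exact_mod_cast h1
    nlinarith [norm_nonneg (⟨y/2, √(1 - (y/2)^2)⟩ : ℂ)]
  · apply Complex.ext <;> simp

lemma qp_bound (y : ℝ) (hy : |y| ≤ 2) (n : ℕ) : |qp n y| ≤ 1 := by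
  obtain ⟨e, he, h1, h2⟩ := exists_unit y hy
  have h := qp_eq_sum e _ h1 y h2 n
  have : ‖(qp n y : ℂ)‖ ≤ 1 := by
    rw [h, ← gco_conv n]
    refine norm_sum_le_of_le _ fun p _ => ?_
    simp [he, abs_of_pos (gco_pos _)]
  simpa using this

lemma S_summable (z : ℂ) (hz : ‖z‖ < 1) : Summable fun n => ‖(gco n : ℂ) * z ^ n‖ := by
  refine Summable.of_nonneg_of_le (fun _ => norm_nonneg _) (fun n => ?_)
    (summable_geometric_of_lt_one (norm_nonneg z) hz)
  rw [norm_mul, norm_pow, Complex.norm_real, Real.norm_eq_abs, abs_of_pos (gco_pos _)]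
  exact mul_le_of_le_one_left (by positivity) (gco_le_one n)

lemma S_sq (z : ℂ) (hz : ‖z‖ < 1) : (∑' n, (gco n : ℂ) * z ^ n) * (∑' n, (gco n : ℂ) * z ^ n) = (1 - z)⁻¹ := by
  rw [tsum_mul_tsum_eq_tsum_sum_antidiagonal_of_summable_norm (S_summable z hz) (S_summable z hz),
    ← tsum_geometric_of_norm_lt_one hz]
  congr 1
  ext n
  have h : ((∑ p ∈ Finset.HasAntidiagonal.antidiagonal n, gco p.1 * gco p.2 : ℝ) : ℂ) = 1 := by rw [gco_conv]; simp
  push_cast at h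
  rw [← one_mul (z ^ n), ← h, Finset.sum_mul]
  refine Finset.sum_congr rfl fun p hp => ?_
  rw [← Finset.HasAntidiagonal.mem_antidiagonal.1 hp, pow_add]; ring

lemma legendre_hasSum (x y : ℝ) (hx0 : 0 ≤ x) (hx1 : x < 1) (hy : |y| ≤ 2) :
    HasSum (fun n => qp n y * x ^ n) (1 / √(1 + x ^ 2 - x * y)) := by
  obtain ⟨e, he, h1, h2⟩ := exists_unit y hy
  set z : ℂ := x * e with hzdef
  have hz : ‖z‖ < 1 := by simp [hzdef, he, abs_of_nonneg hx0, hx1]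
  have hz' : ‖starRingEnd ℂ z‖ < 1 := by simpa using hz
  set S := ∑' n, (gco n : ℂ) * z ^ n with hS
  have hSc : ∑' n, (gco n : ℂ) * (starRingEnd ℂ z) ^ n = starRingEnd ℂ S := by
    rw [hS, Complex.conj_tsum]
    simp
  have hprod : S * starRingEnd ℂ S = ∑' n, ((qp n y * x ^ n : ℝ) : ℂ) := by
    rw [← hSc, hS, tsum_mul_tsum_eq_tsum_sum_antidiagonal_of_summable_norm (S_summable z hz) (S_summable _ hz')]
    congr 1
    ext n
    push_cast
    rw [qp_eq_sum e _ h1 y h2 n, Finset.sum_mul]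
    refine Finset.sum_congr rfl fun p hp => ?_
    rw [← Finset.HasAntidiagonal.mem_antidiagonal.1 hp, hzdef, map_mul, Complex.conj_ofReal, pow_add]; ring
  have hsm : Summable fun n => qp n y * x ^ n := by
    refine Summable.of_norm_bounded (summable_geometric_of_lt_one hx0 hx1) fun n => ?_
    rw [norm_mul, norm_pow, Real.norm_of_nonneg hx0]
    exact mul_le_of_le_one_left (by positivity) (qp_bound y hy n)
  have hval : ∑' n, qp n y * x ^ n = 1 / √(1 + x ^ 2 - x * y) := by
    rw [← Complex.ofReal_tsum, Complex.mul_conj] at hprod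
    have hprod' : Complex.normSq S = ∑' n, qp n y * x ^ n := by exact_mod_cast hprod
    rw [← hprod']
    have h3 : Complex.normSq S * Complex.normSq S = (Complex.normSq (1 - z))⁻¹ := by
      rw [← map_mul, S_sq z hz, map_inv₀]
    have h4 : Complex.normSq (1 - z) = 1 + x ^ 2 - x * y := by
      have : ((Complex.normSq (1 - z) : ℝ) : ℂ) = ((1 + x ^ 2 - x * y : ℝ) : ℂ) := by
        rw [← Complex.mul_conj, hzdef]
        push_cast
        simp only [map_sub, map_one, map_mul, Complex.conj_ofReal]
        linear_combination (x:ℂ)^2 * h1 - x * h2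
      exact_mod_cast this
    rw [h4] at h3
    rw [one_div, ← Real.sqrt_inv, ← h3, Real.sqrt_mul_self (Complex.normSq_nonneg _)]
  rw [← hval]
  exact hsm.hasSum

/-- Coefficient of `z^j` in `(z+1/z)^N`. -/
noncomputable def bw : ℕ → ℤ → ℝ
  | 0, j => if j = 0 then 1 else 0
  | N + 1, j => bw N (j - 1) + bw N (j + 1)

lemma bw_gt (N : ℕ) : ∀ j : ℤ, (N : ℤ) < j → bw N j = 0 := by
  induction N with
  | zero => intro j hj; simp only [bw]; rw [if_neg (by push_cast at hj; omega)]
  | succ N ih =>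
    intro j hj
    push_cast at hj
    simp only [bw]
    rw [ih _ (by omega), ih _ (by omega), add_zero]

lemma bw_odd (N : ℕ) : ∀ j : ℤ, ¬ (2 : ℤ) ∣ (N - j) → bw N j = 0 := by
  induction N with
  | zero => intro j hj; simp only [bw]; rw [if_neg (by push_cast at hj; omega)]
  | succ N ih =>
    intro j hj
    push_cast at hj
    simp only [bw]
    rw [ih _ (by omega), ih _ (by omega), add_zero]

lemma bw_choose (N : ℕ) : ∀ i : ℕ, bw N ((N : ℤ) - 2 * i) = N.choose i := by
  induction N with
  | zero =>
    intro i
    cases i with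
    | zero => simp [bw]
    | succ i => simp only [bw]; rw [if_neg (by push_cast; omega)]; simp
  | succ N ih =>
    intro i
    simp only [bw]
    cases i with
    | zero =>
      have h := ih 0
      have h2 := bw_gt N ((N:ℤ) + 1 + 1) (by omega)
      push_cast at h ⊢
      simp at h ⊢
      rw [h, h2]; norm_num
    | succ i =>
      have e1 : (((N + 1 : ℕ) : ℤ) - 2 * ((i + 1 : ℕ) : ℤ) - 1) = (N : ℤ) - 2 * ((i + 1 : ℕ) : ℤ) := by
        push_cast; ring
      have e2 : (((N + 1 : ℕ) : ℤ) - 2 * ((i + 1 : ℕ) : ℤ) + 1) = (N : ℤ) - 2 * (i : ℤ) := by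
        push_cast; ring
      rw [e1, e2, ih, ih, Nat.choose_succ_succ]
      push_cast; ring

/-- Double integral over the square. -/
noncomputable def dI (f : ℝ → ℝ → ℝ) : ℝ := ∫ a in (0:ℝ)..π, ∫ b in (0:ℝ)..π, f a b

lemma dI_inner_cont (f : ℝ → ℝ → ℝ) (hf : Continuous (Function.uncurry f)) :
    Continuous fun a => ∫ b in (0:ℝ)..π, f a b :=
  intervalIntegral.continuous_parametric_intervalIntegral_of_continuous' hf 0 π

lemma dI_add (f g : ℝ → ℝ → ℝ) (hf : Continuous (Function.uncurry f))
    (hg : Continuous (Function.uncurry g)) : dI (fun a b => f a b + g a b) = dI f + dI g := by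
  unfold dI
  rw [← intervalIntegral.integral_add ((dI_inner_cont f hf).intervalIntegrable _ _)
    ((dI_inner_cont g hg).intervalIntegrable _ _)]
  congr 1
  ext a
  have hfa : Continuous (f a) := hf.comp (Continuous.prodMk_right a)
  have hga : Continuous (g a) := hg.comp (Continuous.prodMk_right a)
  exact intervalIntegral.integral_add (hfa.intervalIntegrable _ _) (hga.intervalIntegrable _ _)

lemma dI_mul (c : ℝ) (f : ℝ → ℝ → ℝ) : dI (fun a b => c * f a b) = c * dI f := by
  unfold dI
  simp only [intervalIntegral.integral_const_mul]

lemma dI_sum (n : ℕ) (f : ℕ → ℝ → ℝ → ℝ) (hf : ∀ i, Continuous (Function.uncurry (f i))) :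
    dI (fun a b => ∑ i ∈ Finset.range n, f i a b) = ∑ i ∈ Finset.range n, dI (f i) := by
  induction n with
  | zero => simp [dI]
  | succ n ih =>
    rw [Finset.sum_range_succ, ← ih, ← dI_add _ _ _ (hf n)]
    · simp only [Finset.sum_range_succ]
    · exact continuous_finsetSum _ fun i _ => hf i

lemma cos_int (k : ℤ) : ∫ a in (0:ℝ)..π, Real.cos (k * a) = if k = 0 then π else 0 := by
  split_ifs with h
  · subst h; simp
  · have hk : (k:ℝ) ≠ 0 := by exact_mod_cast h
    rw [intervalIntegral.integral_comp_mul_left (fun x => Real.cos x) hk]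
    simp [Real.sin_int_mul_pi]

lemma dI_moment (N : ℕ) : ∀ k l : ℤ,
    dI (fun a b => Real.cos (k * a) * Real.cos (l * b) * (Real.cos a + Real.cos b) ^ N)
      = π ^ 2 / 2 ^ N * bw N (k + l) * bw N (k - l) := by
  induction N with
  | zero =>
    intro k l
    simp only [dI, pow_zero, mul_one, intervalIntegral.integral_const_mul,
      intervalIntegral.integral_mul_const, cos_int, bw]
    by_cases hk : k = 0 <;> by_cases hl : l = 0
    · subst hk hl; simp; ring
    · subst hk; simp [hl]
    · subst hl; simp [hk]
    · rw [if_neg hk]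
      by_cases h : k + l = 0
      · rw [if_neg (by omega : ¬ k - l = 0)]; simp
      · rw [if_neg h]; simp
  | succ N ih =>
    intro k l
    have key : (fun a b : ℝ => Real.cos (k * a) * Real.cos (l * b) * (Real.cos a + Real.cos b) ^ (N+1))
      = fun a b : ℝ => (1/2 : ℝ) * (((Real.cos ((k+1 : ℤ) * a) * Real.cos (l * b) * (Real.cos a + Real.cos b) ^ N
        + Real.cos ((k-1 : ℤ) * a) * Real.cos (l * b) * (Real.cos a + Real.cos b) ^ N)
        + Real.cos (k * a) * Real.cos ((l+1 : ℤ) * b) * (Real.cos a + Real.cos b) ^ N)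
        + Real.cos (k * a) * Real.cos ((l-1 : ℤ) * b) * (Real.cos a + Real.cos b) ^ N) := by
      ext a b
      push_cast
      simp only [add_mul, sub_mul, one_mul, Real.cos_add, Real.cos_sub, pow_succ]
      ring
    rw [key, dI_mul, dI_add _ _ (by fun_prop) (by fun_prop), dI_add _ _ (by fun_prop) (by fun_prop),
      dI_add _ _ (by fun_prop) (by fun_prop), ih, ih, ih, ih]
    simp only [bw]
    have e1 : k + 1 + l = k + l + 1 := by ring
    have e2 : k + 1 - l = k - l + 1 := by ring
    have e3 : k - 1 + l = k + l - 1 := by ring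
    have e4 : k - 1 - l = k - l - 1 := by ring
    have e5 : k + (l + 1) = k + l + 1 := by ring
    have e6 : k - (l + 1) = k - l - 1 := by ring
    have e7 : k + (l - 1) = k + l - 1 := by ring
    have e8 : k - (l - 1) = k - l + 1 := by ring
    rw [e1, e2, e3, e4, e5, e6, e7, e8]
    field_simp
    ring

lemma qp_cont (n : ℕ) : Continuous (qp n) := by
  unfold qp
  fun_prop

lemma cos_sum_abs (a b : ℝ) : |Real.cos a + Real.cos b| ≤ 2 := by
  rw [abs_le]
  constructor <;> linarith [Real.cos_le_one a, Real.cos_le_one b, Real.neg_one_le_cos a, Real.neg_one_le_cos b]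

lemma term_bound (k l : ℕ) (x : ℝ) (hx0 : 0 ≤ x) (n : ℕ) (a b : ℝ) :
    ‖Real.cos (k * a) * Real.cos (l * b) * (qp n (Real.cos a + Real.cos b) * x ^ n)‖ ≤ x ^ n := by
  rw [norm_mul, norm_mul, norm_mul, norm_pow, Real.norm_of_nonneg hx0]
  have h1 := Real.abs_cos_le_one (k * a)
  have h2 := Real.abs_cos_le_one (l * b)
  have h3 := qp_bound _ (cos_sum_abs a b) n
  simp only [Real.norm_eq_abs]
  have h4 : |Real.cos (k * a)| * |Real.cos (l * b)| ≤ 1 := mul_le_one₀ h1 (abs_nonneg _) h2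
  have h5 : 0 ≤ x ^ n := by positivity
  calc _ ≤ 1 * (1 * x ^ n) := by gcongr
    _ = x ^ n := by ring

lemma Xi_hasSum (k l : ℕ) (x : ℝ) (hx0 : 0 ≤ x) (hx1 : x < 1) :
    HasSum (fun n => dI (fun a b => Real.cos (k * a) * Real.cos (l * b) *
      (qp n (Real.cos a + Real.cos b) * x ^ n)))
      (dI fun a b => Real.cos (k * a) * Real.cos (l * b) /
      Real.sqrt (1 + x ^ 2 - x * (Real.cos a + Real.cos b))) := by
  have hc (n : ℕ) : Continuous (Function.uncurry fun a b : ℝ => Real.cos (k * a) * Real.cos (l * b) *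
      (qp n (Real.cos a + Real.cos b) * x ^ n)) := by
    have := qp_cont n
    fun_prop
  have hg := summable_geometric_of_lt_one hx0 hx1
  unfold dI
  refine intervalIntegral.hasSum_integral_of_dominated_convergence (fun n _ => x ^ n * π)
    (fun n => (dI_inner_cont _ (hc n)).aestronglyMeasurable) ?_ ?_ ?_ ?_
  · refine fun n => Filter.Eventually.of_forall fun a _ => ?_
    have := intervalIntegral.norm_integral_le_of_norm_le_const (a := 0) (b := π) (C := x ^ n)
      (f := fun b => Real.cos (k * a) * Real.cos (l * b) * (qp n (Real.cos a + Real.cos b) * x ^ n))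
      (fun b _ => term_bound k l x hx0 n a b)
    rwa [sub_zero, abs_of_pos Real.pi_pos] at this
  · exact Filter.Eventually.of_forall fun a _ => hg.mul_right _
  · exact intervalIntegrable_const
  · refine Filter.Eventually.of_forall fun a _ => ?_
    refine intervalIntegral.hasSum_integral_of_dominated_convergence (fun n _ => x ^ n)
      (fun n => ((hc n).comp (Continuous.prodMk_right a)).aestronglyMeasurable) ?_ ?_ ?_ ?_
    · exact fun n => Filter.Eventually.of_forall fun b _ => term_bound k l x hx0 n a b
    · exact Filter.Eventually.of_forall fun _ _ => hg
    · exact intervalIntegrable_const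
    · refine Filter.Eventually.of_forall fun b _ => ?_
      have := (legendre_hasSum x _ hx0 hx1 (cos_sum_abs a b)).mul_left (Real.cos (k * a) * Real.cos (l * b))
      rwa [mul_one_div] at this

lemma dI_qp (k l : ℕ) (x : ℝ) (n : ℕ) : dI (fun a b => Real.cos (k * a) * Real.cos (l * b) *
      (qp n (Real.cos a + Real.cos b) * x ^ n)) = x ^ n * ∑ j ∈ Finset.range (n+1), qc n j *
        (π ^ 2 / 2 ^ (n - 2 * j) * bw (n - 2 * j) (k + l) * bw (n - 2 * j) (k - l)) := by
  have : (fun a b : ℝ => Real.cos (k * a) * Real.cos (l * b) *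
      (qp n (Real.cos a + Real.cos b) * x ^ n)) = fun a b => x ^ n * ∑ j ∈ Finset.range (n+1),
        qc n j * (Real.cos ((k:ℤ) * a) * Real.cos ((l:ℤ) * b) * (Real.cos a + Real.cos b) ^ (n - 2 * j)) := by
    ext a b
    simp only [qp, Finset.sum_mul, Finset.mul_sum, Int.cast_natCast]
    refine Finset.sum_congr rfl fun j _ => ?_
    ring
  rw [this, dI_mul, dI_sum]
  · simp only [dI_mul, dI_moment]
  · intro i; fun_prop

/-- Terms of the terminating Saalschützian sum. -/
noncomputable def Tt (s l m i : ℕ) : ℝ := if i ≤ m then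
  (-1) ^ i * rising (1/2) (s + m + i) * rising (1/2) (l + i) /
    ((m - i).factorial * i.factorial * (s + i).factorial * (l + i).factorial) else 0

/-- WZ companion of `Tt`. -/
noncomputable def Gt (s l m i : ℕ) : ℝ := if i ≤ m + 1 then
  -(s + 2 * m + 3/2) * i * (s + i) * (l + i) *
  ((-1) ^ i * rising (1/2) (s + m + i) * rising (1/2) (l + i) /
    ((m + 1 - i).factorial * i.factorial * (s + i).factorial * (l + i).factorial)) else 0

lemma wz (k l m i : ℕ) (hi : i ≤ m + 1) :
    ((l:ℝ) + 1 + m) * ((k + l : ℕ) + 1 + m) * (m + 1) * Tt (k + l) l (m+1) i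
     - (m + 1/2) * (k + m + 1/2) * ((k + l : ℕ) + m + 1/2) * Tt (k + l) l m i
    = Gt (k+l) l m (i+1) - Gt (k+l) l m i := by
  obtain ⟨s, hs⟩ : ∃ s, s = k + l := ⟨_, rfl⟩
  have hsr : (k:ℝ) = s - l := by rw [hs]; push_cast; ring
  rw [← hs, hsr]
  unfold Tt Gt
  rcases Nat.lt_or_ge m i with h | h
  · obtain rfl : i = m + 1 := by omega
    rw [if_pos le_rfl, if_neg (by omega), if_neg (by omega), if_pos le_rfl]
    have e1 : s + (m + 1) + (m + 1) = s + m + (m + 1) + 1 := by ring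
    rw [e1, rising_succ' _ (s + m + (m+1))]
    push_cast
    field_simp
    ring
  · obtain ⟨r, rfl⟩ : ∃ r, m = i + r := ⟨m - i, by omega⟩
    rw [if_pos (by omega), if_pos (by omega), if_pos (by omega), if_pos (by omega)]
    have e1 : s + (i + r + 1) + i = s + (i + r) + i + 1 := by ring
    have e2 : s + (i + r) + (i + 1) = s + (i + r) + i + 1 := by ring
    have e3 : i + r + 1 - i = r + 1 := by omega
    have e4 : i + r - i = r := by omega
    have e5 : i + r + 1 - (i + 1) = r := by omega
    rw [e1, e2, e3, e4, e5, ← add_assoc l, ← add_assoc s i 1, rising_succ' _ (s + (i + r) + i), rising_succ' _ (l + i),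
      Nat.factorial_succ r, Nat.factorial_succ i, Nat.factorial_succ (s + i), Nat.factorial_succ (l + i)]
    push_cast
    field_simp
    ring

lemma Tt_sum_rec (k l m : ℕ) :
    ((l:ℝ) + 1 + m) * ((k + l : ℕ) + 1 + m) * (m + 1) * ∑ i ∈ Finset.range (m + 2), Tt (k + l) l (m+1) i
     = (m + 1/2) * (k + m + 1/2) * ((k + l : ℕ) + m + 1/2) * ∑ i ∈ Finset.range (m + 1), Tt (k + l) l m i := by
  have h0 : ∑ i ∈ Finset.range (m + 1), Tt (k + l) l m i = ∑ i ∈ Finset.range (m + 2), Tt (k + l) l m i := by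
    rw [Finset.sum_range_succ _ (m+1)]
    simp [Tt]
  rw [h0, ← sub_eq_zero, Finset.mul_sum, Finset.mul_sum, ← Finset.sum_sub_distrib]
  rw [Finset.sum_congr rfl fun i hi => wz k l m i (by have := Finset.mem_range.1 hi; omega),
    Finset.sum_range_sub]
  simp [Gt]

lemma Tt_sum (k l m : ℕ) : ∑ i ∈ Finset.range (m + 1), Tt (k + l) l m i =
    rising (1/2) (k + l) * rising (1/2) l / ((k+l).factorial * l.factorial) *
    (rising (1/2) m * rising (k + 1/2) m * rising (k + l + 1/2) m /
      (rising (l + 1) m * rising (k + l + 1) m * m.factorial)) := by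
  induction m with
  | zero => simp [Tt, rising_zero']
  | succ m ih =>
    have h := Tt_sum_rec k l m
    rw [ih] at h
    have h1 : ((l:ℝ) + 1 + m) * ((k + l : ℕ) + 1 + m) * (m + 1) ≠ 0 := by positivity
    apply mul_left_cancel₀ h1
    rw [h]
    simp only [rising_succ', Nat.factorial_succ]
    have p1 := (rising_pos' (l + 1) (by positivity) m).ne'
    have p2 := (rising_pos' (k + l + 1) (by positivity) m).ne'
    push_cast
    field_simp
    ring

lemma central (q : ℕ) : ((2 * q).choose q : ℝ) = 4 ^ q * (rising (1/2) q / q.factorial) := by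
  induction q with
  | zero => simp [rising_zero']
  | succ q ih =>
    have h := Nat.succ_mul_centralBinom_succ q
    unfold Nat.centralBinom at h
    have h' : ((q:ℝ) + 1) * ((2 * (q+1)).choose (q+1) : ℝ) = 2 * (2 * q + 1) * ((2*q).choose q : ℝ) := by
      exact_mod_cast h
    rw [ih] at h'
    have : (q:ℝ) + 1 ≠ 0 := by positivity
    apply mul_left_cancel₀ this
    rw [h', rising_succ', Nat.factorial_succ]
    push_cast
    field_simp
    ring

lemma central' (k l i : ℕ) (hk : k ≤ l) (hk1 : l - k ≤ 1) :
    ((k + l + 2 * i).choose (l + i) : ℝ) = 2 ^ (k + l + 2 * i) * (rising (1/2) (l + i) / (l+i).factorial) := by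
  rcases Nat.lt_or_ge k l with h | h
  · obtain rfl : l = k + 1 := by omega
    have c := central (k + i + 1)
    have e1 : 2 * (k + i + 1) = (2 * (k + i) + 1) + 1 := by ring
    rw [e1, Nat.choose_succ_succ, ← Nat.choose_symm_half] at c
    have e2 : k + (k + 1) + 2 * i = 2 * (k + i) + 1 := by ring
    have e3 : k + 1 + i = k + i + 1 := by ring
    rw [e2, e3]
    push_cast at c
    have e4 : (2:ℝ) ^ (2 * (k + i) + 1) = 4 ^ (k + i + 1) / 2 := by
      rw [pow_succ, pow_mul, pow_succ]; norm_num; ring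
    rw [e4]
    linarith
  · obtain rfl : l = k := by omega
    have c := central (l + i)
    have e2 : l + l + 2 * i = 2 * (l + i) := by ring
    rw [e2, c, pow_mul]; norm_num

lemma coef_zero (k l n : ℕ) (h : ∀ m, n ≠ k + l + 2 * m) : ∑ j ∈ Finset.range (n+1), qc n j *
        (π ^ 2 / 2 ^ (n - 2 * j) * bw (n - 2 * j) (k + l) * bw (n - 2 * j) (k - l)) = 0 := by
  refine Finset.sum_eq_zero fun j _ => ?_
  by_cases hj : 2 * j ≤ n
  · have : bw (n - 2 * j) ((k:ℤ) + l) = 0 := by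
      by_cases h2 : n < k + l
      · exact bw_gt _ _ (by omega)
      · apply bw_odd
        intro ⟨c, hc⟩
        have := h ((n - (k + l)) / 2)
        omega
    rw [this]; simp
  · simp [qc, hj]

lemma coef_val (k l m : ℕ) (hk : k ≤ l) (hk1 : l - k ≤ 1) :
    ∑ j ∈ Finset.range (k + l + 2 * m + 1), qc (k + l + 2 * m) j *
      (π ^ 2 / 2 ^ (k + l + 2 * m - 2 * j) * bw (k + l + 2 * m - 2 * j) (k + l)
        * bw (k + l + 2 * m - 2 * j) (k - l)) =
      π ^ 2 * (-1) ^ m * ∑ i ∈ Finset.range (m + 1), Tt (k + l) l m i := by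
  rw [← Finset.sum_subset (Finset.range_mono (by omega : m + 1 ≤ k + l + 2 * m + 1)),
    ← Finset.sum_range_reflect, Finset.mul_sum]
  · refine Finset.sum_congr rfl fun i hi => ?_
    have hi := Finset.mem_range.1 hi
    obtain ⟨r, rfl⟩ : ∃ r, m = i + r := ⟨m - i, by omega⟩
    have e1 : i + r + 1 - 1 - i = r := by omega
    have e2 : k + l + 2 * (i + r) - 2 * r = k + l + 2 * i := by omega
    have e3 : k + l + 2 * (i + r) - r = k + l + (i + r) + i := by omega
    have e4 : i + r - i = r := by omega
    have b1 : bw (k + l + 2 * i) ((k:ℤ) + l) = (k + l + 2 * i).choose i := by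
      rw [← bw_choose]; congr 1; push_cast; ring
    have b2 : bw (k + l + 2 * i) ((k:ℤ) - l) = (k + l + 2 * i).choose (l + i) := by
      rw [← bw_choose]; congr 1; push_cast; ring
    have hc : ((k + l + 2 * i).choose i : ℝ) * i.factorial * (k + l + i).factorial = (k + l + 2 * i).factorial := by
      have := Nat.choose_mul_factorial_mul_factorial (by omega : i ≤ k + l + 2 * i)
      have e : k + l + 2 * i - i = k + l + i := by omega
      rw [e] at this
      exact_mod_cast this
    have hc' : ((k + l + 2 * i).choose i : ℝ) = (k + l + 2 * i).factorial / (i.factorial * (k + l + i).factorial) := by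
      rw [← hc]; field_simp
    rw [e1]
    unfold qc Tt
    rw [e2, if_pos (by omega), if_pos (by omega), e3, e4, b1, b2, central' k l i hk hk1, hc']
    have hs : (-1:ℝ) ^ (i + r) * (-1) ^ i = (-1) ^ r := by
      rw [← pow_add, show i + r + i = 2 * i + r by ring, pow_add, pow_mul]; simp
    rw [← hs]
    field_simp
  · intro j _ hj
    have hj := Finset.mem_range.not.1 hj
    by_cases h : 2 * j ≤ k + l + 2 * m
    · rw [bw_gt _ ((k:ℤ) + l) (by omega)]; simp
    · simp [qc, h]

lemma rising_half_ratio (k l : ℕ) (hk : k ≤ l) (hk1 : l - k ≤ 1) :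
    rising (1/2) l / (k+l).factorial = 1 / (2 ^ (k + l) * k.factorial) := by
  have c := central' k l 0 hk hk1
  simp only [mul_zero, add_zero] at c
  have h := Nat.choose_mul_factorial_mul_factorial (by omega : l ≤ k + l)
  rw [Nat.add_sub_cancel] at h
  have h' : ((k+l).choose l : ℝ) * l.factorial * k.factorial = (k+l).factorial := by exact_mod_cast h
  rw [c] at h'
  field_simp at h' ⊢
  linarith

theorem Xi2_eq_clausen3F2 (k₁ k₂ : ℕ) (hk : k₁ ≤ k₂) (hk1 : k₂ - k₁ ≤ 1)
    (x : ℝ) (hx0 : 0 ≤ x) (hx1 : x < 1) :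
    Xi2 k₁ k₂ x =
      π ^ 2 * rising (1 / 2) (k₁ + k₂) * (2 * x) ^ (k₁ + k₂) /
          (4 ^ (k₁ + k₂ + 1) * (k₁.factorial : ℝ) * (k₂.factorial : ℝ)) *
        clausen3F2 (1 / 2) (k₁ + 1 / 2) (k₁ + k₂ + 1 / 2) (k₂ + 1) (k₁ + k₂ + 1) (-x ^ 2) := by
  have hS := Xi_hasSum k₁ k₂ x hx0 hx1
  simp only [dI_qp] at hS
  have hinj : Function.Injective fun m : ℕ => k₁ + k₂ + 2 * m := fun a b h => by
    simp only at h; omega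
  rw [← hinj.hasSum_iff] at hS
  · have hX : Xi2 k₁ k₂ x = (1/4) * dI fun a b => Real.cos (k₁ * a) * Real.cos (k₂ * b) /
      Real.sqrt (1 + x ^ 2 - x * (Real.cos a + Real.cos b)) := rfl
    rw [hX, ← hS.tsum_eq, clausen3F2, ← tsum_mul_left, ← tsum_mul_left]
    congr 1
    ext m
    simp only [Function.comp]
    rw [coef_val k₁ k₂ m hk hk1, Tt_sum]
    have hr := rising_half_ratio k₁ k₂ hk hk1
    have hr2 : rising (1/2) (k₁ + k₂) * rising (1/2) k₂ / ((k₁+k₂).factorial * k₂.factorial)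
        = rising (1/2) (k₁ + k₂) * (1 / (2 ^ (k₁ + k₂) * k₁.factorial)) / k₂.factorial := by
      rw [← hr]; field_simp
    rw [hr2]
    generalize rising (1/2) m * rising (k₁ + 1/2) m * rising (k₁ + k₂ + 1/2) m /
      (rising (k₂ + 1) m * rising (k₁ + k₂ + 1) m * m.factorial) = Q
    generalize rising (1/2) (k₁ + k₂) = R
    have e4 : (4:ℝ) ^ (k₁ + k₂ + 1) = 4 * (2 ^ (k₁ + k₂) * 2 ^ (k₁ + k₂)) := by
      rw [← mul_pow, pow_succ]; norm_num; ring
    have e5 : (-x ^ 2) ^ m = (-1) ^ m * x ^ (2 * m) := by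
      rw [neg_pow, ← pow_mul]
    rw [e4, e5, mul_pow, pow_add x]
    generalize (-1:ℝ) ^ m = w
    generalize x ^ (2 * m) = y
    have h2 : (2:ℝ) ^ (k₁ + k₂) ≠ 0 := by positivity
    generalize (2:ℝ) ^ (k₁ + k₂) = t at *
    field_simp
  · intro n hn
    rw [coef_zero, mul_zero]
    intro m hm
    exact hn ⟨m, hm.symm⟩
end

section
/- For a nonnegative integer k and 0 < x < 1, the functions Ξ₂ satisfy the differential-difference relation (1/2)·(1/x + (1−x²) d/dx) Ξ₂^{[k,k+1]}(x) = (k + 1/4) Ξ₂^{[k,k]}(x) − (k + 3/4) Ξ₂^{[k+1,k+1]}(x). -/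
open Real

open MeasureTheory

namespace XiAux

/-- Lebesgue measure on the interval from `0` to `π`. -/
noncomputable def mu : Measure ℝ := volume.restrict (Set.Ioc (0:ℝ) π)

instance mu_finite : IsFiniteMeasure mu := by
  unfold mu
  exact ⟨by simp⟩

/-- The double integral over the square. -/
noncomputable def J (f : ℝ × ℝ → ℝ) : ℝ := ∫ p, f p ∂(mu.prod mu)

/-- The quantity under the root. -/
noncomputable def D (x : ℝ) (p : ℝ × ℝ) : ℝ := 1 + x ^ 2 - x * (Real.cos p.1 + Real.cos p.2)

lemma D_ge {x : ℝ} (hx0 : 0 < x) (p : ℝ × ℝ) : (1 - x) ^ 2 ≤ D x p := by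
  unfold D
  nlinarith [Real.cos_le_one p.1, Real.cos_le_one p.2]

lemma D_pos {x : ℝ} (hx0 : 0 < x) (hx1 : x < 1) (p : ℝ × ℝ) : 0 < D x p :=
  lt_of_lt_of_le (by have : 0 < 1 - x := by linarith
                     positivity) (D_ge hx0 p)

lemma D_cont (x : ℝ) : Continuous (D x) := by
  unfold D; fun_prop

lemma integrable_of_cont {f : ℝ × ℝ → ℝ} (hf : Continuous f) : Integrable f (mu.prod mu) := by
  have h : IntegrableOn f (Set.Icc (0:ℝ) π ×ˢ Set.Icc (0:ℝ) π) volume :=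
    hf.continuousOn.integrableOn_compact (isCompact_Icc.prod isCompact_Icc)
  have h2 := h.mono_set (Set.prod_mono Set.Ioc_subset_Icc_self Set.Ioc_subset_Icc_self)
  unfold IntegrableOn at h2
  unfold mu
  rwa [Measure.prod_restrict]

lemma J_iter {f : ℝ × ℝ → ℝ} (hf : Continuous f) :
    J f = ∫ s in (0:ℝ)..π, ∫ t in (0:ℝ)..π, f (s, t) := by
  unfold J
  rw [integral_prod _ (integrable_of_cont hf)]
  simp only [intervalIntegral.integral_of_le Real.pi_pos.le]
  rfl

lemma J_swap (f : ℝ × ℝ → ℝ) : J (fun p => f (p.2, p.1)) = J f :=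
  integral_prod_swap (μ := mu) (ν := mu) f

lemma J_add {f g : ℝ × ℝ → ℝ} (hf : Continuous f) (hg : Continuous g) :
    J (fun p => f p + g p) = J f + J g :=
  integral_add (integrable_of_cont hf) (integrable_of_cont hg)

lemma J_smul (c : ℝ) (f : ℝ × ℝ → ℝ) : J (fun p => c * f p) = c * J f :=
  integral_const_mul c f

lemma cadd {f g : ℝ × ℝ → ℝ} (hf : Continuous f) (hg : Continuous g) :
    Continuous (fun p => f p + g p) := hf.add hg

lemma cmul (c : ℝ) {f : ℝ × ℝ → ℝ} (hf : Continuous f) :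
    Continuous (fun p => c * f p) := continuous_const.mul hf

/-- integrand of `a` -/
noncomputable def fa (m n : ℤ) (x : ℝ) (p : ℝ × ℝ) : ℝ :=
  Real.cos (m * p.1) * Real.cos (n * p.2) / Real.sqrt (D x p)

/-- integrand of `b` -/
noncomputable def fb (m n : ℤ) (x : ℝ) (p : ℝ × ℝ) : ℝ :=
  Real.cos (m * p.1) * Real.cos (n * p.2) / (D x p * Real.sqrt (D x p))

lemma fa_cont (m n : ℤ) {x : ℝ} (hx0 : 0 < x) (hx1 : x < 1) : Continuous (fa m n x) := by
  unfold fa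
  refine Continuous.div (by fun_prop) (D_cont x).sqrt (fun p => ?_)
  exact (Real.sqrt_pos.2 (D_pos hx0 hx1 p)).ne'

lemma fb_cont (m n : ℤ) {x : ℝ} (hx0 : 0 < x) (hx1 : x < 1) : Continuous (fb m n x) := by
  unfold fb
  refine Continuous.div (by fun_prop) ((D_cont x).mul (D_cont x).sqrt) (fun p => ?_)
  exact (mul_pos (D_pos hx0 hx1 p) (Real.sqrt_pos.2 (D_pos hx0 hx1 p))).ne'

lemma fa_swap (m n : ℤ) (x : ℝ) : J (fa m n x) = J (fa n m x) := by
  rw [← J_swap (fa n m x)]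
  congr 1; funext p
  simp only [fa, D]
  rw [mul_comm (Real.cos (m * p.1)), add_comm (Real.cos p.1)]

lemma fb_swap (m n : ℤ) (x : ℝ) : J (fb m n x) = J (fb n m x) := by
  rw [← J_swap (fb n m x)]
  congr 1; funext p
  simp only [fb, D]
  rw [mul_comm (Real.cos (m * p.1)), add_comm (Real.cos p.1)]

/-- expanding `D` times the `b` integrand -/
lemma rel_a (m n : ℤ) {x : ℝ} (hx0 : 0 < x) (hx1 : x < 1) :
    J (fa m n x) = (1 + x ^ 2) * J (fb m n x) + (-(x / 2)) * (J (fb (m - 1) n x) + J (fb (m + 1) n x)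
      + J (fb m (n - 1) x) + J (fb m (n + 1) x)) := by
  have c := fun m n => fb_cont m n hx0 hx1
  rw [← J_add (c _ _) (c _ _), ← J_add (cadd (c _ _) (c _ _)) (c _ _),
    ← J_add (cadd (cadd (c _ _) (c _ _)) (c _ _)) (c _ _), ← J_smul, ← J_smul,
    ← J_add (cmul _ (c _ _)) (cmul _ (cadd (cadd (cadd (c _ _) (c _ _)) (c _ _)) (c _ _)))]
  congr 1; funext p
  have hD := D_pos hx0 hx1 p
  have hs := Real.sqrt_pos.2 hD
  simp only [fa, fb]
  push_cast
  simp only [sub_mul, add_mul, one_mul, Real.cos_sub, Real.cos_add]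
  have e : Real.cos (m * p.1) * Real.cos (n * p.2) / Real.sqrt (D x p) =
      Real.cos (m * p.1) * Real.cos (n * p.2) * D x p / (D x p * Real.sqrt (D x p)) := by
    field_simp
  rw [e]
  have e2 : D x p = 1 + x ^ 2 - x * (Real.cos p.1 + Real.cos p.2) := rfl
  generalize (D x p * Real.sqrt (D x p)) = q
  rw [e2]
  ring

/-- integration by parts in the inner variable -/
lemma ibp_inner (n : ℤ) {x : ℝ} (hx0 : 0 < x) (hx1 : x < 1) (s : ℝ) :
    ∫ t in (0:ℝ)..π, (n * (Real.cos (n * t) / Real.sqrt (D x (s, t)))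
      - (x / 2) * (Real.sin (n * t) * Real.sin t / (D x (s, t) * Real.sqrt (D x (s, t))))) = 0 := by
  have hD := fun t => D_pos hx0 hx1 (s, t)
  have cD : Continuous fun t => D x (s, t) := (D_cont x).comp (by fun_prop)
  have key := intervalIntegral.integral_eq_sub_of_hasDerivAt (a := 0) (b := π)
    (f := fun t => Real.sin (n * t) / Real.sqrt (D x (s, t)))
    (f' := fun t => (n * (Real.cos (n * t) / Real.sqrt (D x (s, t)))
      - (x / 2) * (Real.sin (n * t) * Real.sin t / (D x (s, t) * Real.sqrt (D x (s, t)))))) ?_ ?_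
  · rw [key]; simp [Real.sin_int_mul_pi]
  · intro t _
    have h1 : HasDerivAt (fun t => Real.sin (n * t)) (Real.cos (n * t) * n) t := by
      simpa using ((hasDerivAt_id t).const_mul (n:ℝ)).sin
    have h2 : HasDerivAt (fun t => D x (s, t)) (x * Real.sin t) t := by
      unfold D
      have := (((Real.hasDerivAt_cos t).const_add (Real.cos s)).const_mul x).const_sub (1 + x ^ 2)
      simpa using this
    have h3 := h1.div (h2.sqrt (hD t).ne') (Real.sqrt_pos.2 (hD t)).ne'
    refine h3.congr_deriv ?_
    have hs := Real.sqrt_pos.2 (hD t)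
    have hq := Real.sq_sqrt (hD t).le
    generalize Real.sqrt (D x (s, t)) = r at *
    rw [← hq]
    field_simp
  · apply Continuous.intervalIntegrable
    have hs := fun t => (Real.sqrt_pos.2 (hD t)).ne'
    have hs2 := fun t => (mul_pos (hD t) (Real.sqrt_pos.2 (hD t))).ne'
    refine (continuous_const.mul (Continuous.div (by fun_prop) cD.sqrt hs)).sub
      (continuous_const.mul (Continuous.div (by fun_prop) (cD.mul cD.sqrt) hs2))

lemma rel_n (m n : ℤ) {x : ℝ} (hx0 : 0 < x) (hx1 : x < 1) :
    n * J (fa m n x) + (-(x / 4)) * (J (fb m (n - 1) x) + (-1) * J (fb m (n + 1) x)) = 0 := by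
  have c := fun m n => fb_cont m n hx0 hx1
  have ca := fun m n => fa_cont m n hx0 hx1
  have cc : Continuous fun p => n * fa m n x p + (-(x / 4)) * (fb m (n - 1) x p + (-1) * fb m (n + 1) x p) :=
    ((ca _ _).const_mul _).add (((c _ _).add ((c _ _).const_mul _)).const_mul _)
  rw [← J_smul, ← J_smul (-1), ← J_add (c _ _) (cmul _ (c _ _)), ← J_smul,
    ← J_add (cmul _ (ca _ _)) (cmul _ (cadd (c _ _) (cmul _ (c _ _)))), J_iter cc]
  have : ∀ s : ℝ, ∫ t in (0:ℝ)..π, (n * fa m n x (s, t) + (-(x / 4)) * (fb m (n - 1) x (s, t)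
      + (-1) * fb m (n + 1) x (s, t))) = 0 := by
    intro s
    have h := ibp_inner n hx0 hx1 s
    have h2 := congrArg (fun z => Real.cos (m * s) * z) h
    simp only [mul_zero] at h2
    rw [← intervalIntegral.integral_const_mul] at h2
    rw [← h2]
    congr 1; funext t
    simp only [fa, fb]
    push_cast
    simp only [sub_mul, add_mul, one_mul, Real.cos_sub, Real.cos_add]
    ring
  simp only [this, intervalIntegral.integral_zero]

lemma rel_m (m n : ℤ) {x : ℝ} (hx0 : 0 < x) (hx1 : x < 1) :
    m * J (fa m n x) + (-(x / 4)) * (J (fb (m - 1) n x) + (-1) * J (fb (m + 1) n x)) = 0 := by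
  have := rel_n n m hx0 hx1
  rwa [fa_swap, fb_swap n, fb_swap n] at this

lemma fa_hasDerivAt (m n : ℤ) {x : ℝ} (hx0 : 0 < x) (hx1 : x < 1) (p : ℝ × ℝ) :
    HasDerivAt (fun y => fa m n y p)
      (-(1 / (2 * x)) * (fa m n x p + (-(1 - x ^ 2)) * fb m n x p)) x := by
  have hD := D_pos hx0 hx1 p
  have h2 : HasDerivAt (fun y => D y p) (2 * x - (Real.cos p.1 + Real.cos p.2)) x := by
    unfold D
    have := ((hasDerivAt_pow 2 x).const_add 1).sub
      ((hasDerivAt_id x).mul_const (Real.cos p.1 + Real.cos p.2))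
    exact this.congr_deriv (by simp)
  have h3 := (hasDerivAt_const x (Real.cos (m * p.1) * Real.cos (n * p.2))).div
    (h2.sqrt hD.ne') (Real.sqrt_pos.2 hD).ne'
  unfold fa fb
  refine h3.congr_deriv ?_
  have hs := Real.sqrt_pos.2 hD
  have hq := Real.sq_sqrt hD.le
  have e : 2 * x - (Real.cos p.1 + Real.cos p.2) = (D x p - (1 - x ^ 2)) / x := by
    unfold D; field_simp; ring
  rw [e]
  generalize Real.sqrt (D x p) = r at *
  rw [← hq]
  field_simp
  ring

lemma J_hasDerivAt (m n : ℤ) {x : ℝ} (hx0 : 0 < x) (hx1 : x < 1) :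
    HasDerivAt (fun y => J (fa m n y))
      (-(1 / (2 * x)) * (J (fa m n x) + (-(1 - x ^ 2)) * J (fb m n x))) x := by
  have ca := fa_cont m n hx0 hx1
  have cb := fb_cont m n hx0 hx1
  rw [← J_smul, ← J_add ca (cb.const_mul _), ← J_smul]
  have hU : Set.Ioo (x / 2) ((1 + x) / 2) ∈ nhds x := Ioo_mem_nhds (by linarith) (by linarith)
  have hb : ∀ y ∈ Set.Ioo (x / 2) ((1 + x) / 2), 0 < y ∧ y < 1 ∧ x / 2 < y ∧ (1 - x) / 2 ≤ 1 - y := by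
    rintro y ⟨h1, h2⟩
    refine ⟨by linarith, by linarith, h1, by linarith⟩
  set d := (1 - x) / 2 with hd
  have hd0 : 0 < d := by rw [hd]; linarith
  refine (hasDerivAt_integral_of_dominated_loc_of_deriv_le (μ := mu.prod mu)
    (F := fun y p => fa m n y p)
    (F' := fun y p => (-(1 / (2 * y)) * (fa m n y p + (-(1 - y ^ 2)) * fb m n y p)))
    (bound := fun _ => 1 / x * (1 / d + 1 / (d ^ 2 * d))) hU ?_ (integrable_of_cont ca) ?_ ?_
    (integrable_const _) ?_).2
  · filter_upwards [hU] with y hy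
    exact (fa_cont m n (hb y hy).1 (hb y hy).2.1).aestronglyMeasurable
  · exact (continuous_const.mul (ca.add (cb.const_mul _))).aestronglyMeasurable
  · refine Filter.Eventually.of_forall (fun p y hy => ?_)
    obtain ⟨y0, y1, y2, y3⟩ := hb y hy
    have hDd : d ^ 2 ≤ D y p := le_trans (by gcongr) (D_ge y0 p)
    have hsd : d ≤ Real.sqrt (D y p) := Real.le_sqrt_of_sq_le hDd
    have hD := D_pos y0 y1 p
    have hcc : |Real.cos (m * p.1) * Real.cos (n * p.2)| ≤ 1 := by
      rw [abs_mul]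
      exact mul_le_one₀ (Real.abs_cos_le_one _) (abs_nonneg _) (Real.abs_cos_le_one _)
    have ha : |fa m n y p| ≤ 1 / d := by
      unfold fa
      rw [abs_div, abs_of_nonneg (Real.sqrt_nonneg _)]
      gcongr
    have hbb : |fb m n y p| ≤ 1 / (d ^ 2 * d) := by
      unfold fb
      rw [abs_div, abs_of_nonneg (mul_nonneg hD.le (Real.sqrt_nonneg _))]
      gcongr
    have h1 : |-(1 - y ^ 2)| ≤ 1 := by
      rw [abs_le]; constructor <;> nlinarith
    have h2 : |-(1 / (2 * y))| ≤ 1 / x := by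
      rw [abs_neg, abs_of_pos (by positivity)]
      apply one_div_le_one_div_of_le hx0; linarith
    rw [Real.norm_eq_abs, abs_mul]
    refine mul_le_mul h2 ?_ (abs_nonneg _) (by positivity)
    refine (abs_add_le _ _).trans (add_le_add ha ?_)
    rw [abs_mul]
    calc _ ≤ 1 * (1 / (d ^ 2 * d)) := mul_le_mul h1 hbb (abs_nonneg _) zero_le_one
      _ = _ := one_mul _
  · refine Filter.Eventually.of_forall (fun p y hy => ?_)
    exact fa_hasDerivAt m n (hb y hy).1 (hb y hy).2.1 p

lemma Xi2_eq (k l : ℕ) {x : ℝ} (hx0 : 0 < x) (hx1 : x < 1) :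
    Xi2 k l x = (1 / 4) * J (fa k l x) := by
  rw [J_iter (fa_cont _ _ hx0 hx1)]
  simp [Xi2, fa, D]

lemma Xi2_deriv (k l : ℕ) {x : ℝ} (hx0 : 0 < x) (hx1 : x < 1) :
    deriv (Xi2 k l) x = (1 / 4) * (-(1 / (2 * x)) * (J (fa k l x) + (-(1 - x ^ 2)) * J (fb k l x))) := by
  refine (((J_hasDerivAt k l hx0 hx1).const_mul (1 / 4)).congr_of_eventuallyEq ?_).deriv
  filter_upwards [Ioo_mem_nhds hx0 hx1] with y hy
  exact Xi2_eq k l hy.1 hy.2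

end XiAux

theorem Xi2_diff_difference (k : ℕ) (x : ℝ) (hx0 : 0 < x) (hx1 : x < 1) :
    (1 / 2) * (1 / x * Xi2 k (k + 1) x + (1 - x ^ 2) * deriv (Xi2 k (k + 1)) x) =
      ((k : ℝ) + 1 / 4) * Xi2 k k x - ((k : ℝ) + 3 / 4) * Xi2 (k + 1) (k + 1) x := by
  rw [XiAux.Xi2_deriv _ _ hx0 hx1, XiAux.Xi2_eq _ _ hx0 hx1, XiAux.Xi2_eq _ _ hx0 hx1,
    XiAux.Xi2_eq _ _ hx0 hx1]
  have r1 := XiAux.rel_n k k hx0 hx1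
  have r2 := XiAux.rel_n (k + 1) (k + 1) hx0 hx1
  have r3 := XiAux.rel_n k (k + 1) hx0 hx1
  have r4 := XiAux.rel_m k (k + 1) hx0 hx1
  have r5 := XiAux.rel_a k k hx0 hx1
  have r6 := XiAux.rel_a (k + 1) (k + 1) hx0 hx1
  have r7 := XiAux.rel_a k (k + 1) hx0 hx1
  rw [XiAux.fb_swap (k - 1) k, XiAux.fb_swap (k + 1) k] at r5
  rw [XiAux.fb_swap (k + 1 + 1) (k + 1)] at r6
  rw [show ((k:ℤ) + 1 - 1) = k by ring] at r2 r3 r6 r7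
  rw [XiAux.fb_swap (k + 1) k] at r2 r6
  push_cast at *
  generalize XiAux.J (XiAux.fa k k x) = akk at *
  generalize XiAux.J (XiAux.fa k (k + 1) x) = akl at *
  generalize XiAux.J (XiAux.fa (k + 1) (k + 1) x) = all at *
  generalize XiAux.J (XiAux.fb k k x) = bkk at *
  generalize XiAux.J (XiAux.fb k (k + 1) x) = bkl at *
  generalize XiAux.J (XiAux.fb (k + 1) (k + 1) x) = bll at *
  generalize XiAux.J (XiAux.fb k (k - 1) x) = u at *
  generalize XiAux.J (XiAux.fb (k + 1) (k + 1 + 1) x) = v at *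
  generalize XiAux.J (XiAux.fb (k - 1) (k + 1) x) = w at *
  generalize XiAux.J (XiAux.fb k (k + 1 + 1) x) = z at *
  have R : ((k : ℝ) + 1 / 4) * akk - ((k : ℝ) + 3 / 4) * all
      = (1 + x ^ 2) / 4 * (bkk + bll) - x * bkl := by
    linear_combination r1 - r2 + (1 / 4) * r5 + (1 / 4) * r6
  have S : akl = x / 4 * (bkk - z - w + bll) := by
    linear_combination r3 - r4
  have T : (1 + x ^ 2) * bkl = 3 * x / 4 * (bkk + bll) + x / 4 * (z + w) := by
    linear_combination S - r7
  have G : (1 / 2) * (1 / x * akl + (1 - x ^ 2) * (-(1 / (2 * x)) * (akl + (-(1 - x ^ 2)) * bkl)))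
      = (1 + x ^ 2) / 4 * (bkk + bll) - x * bkl := by
    field_simp
    linear_combination 4 * (1 + x ^ 2) * S + 4 * (1 + x ^ 2) * T
  linear_combination (1 / 4) * G - (1 / 4) * R
end
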